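/- arXiv:2207.06980 — 7 statements merged into one kernel-verified Lean document; each statement's English description precedes it below -/
import Mathlib

section
/- Let α, β₁, β₂ be intuitionistic fuzzy values with α ⊂ β₁ ⊂ β₂ in Atanassov's order. Then Z(α, β₁) ≤ Z(α, β₂), and consequently JS(α, β₁) ≤ JS(α, β₂). -/
/-- `L p q = p·log₂(2p/(p+q)) + q·log₂(2q/(p+q))`, with Lean's conventions
`0 * log₂ _ = 0` and `x / 0 = 0`, `log₂ 0 = 0` implementing `0·log 0 = 0`
and `0·log(0/0) = 0`. -/
noncomputable def L (p q : ℝ) : ℝ :=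
  p * Real.logb 2 (2 * p / (p + q)) + q * Real.logb 2 (2 * q / (p + q))

/-- An intuitionistic fuzzy value: a pair `⟨μ, ν⟩` with `0 ≤ μ`, `0 ≤ ν`,
`μ + ν ≤ 1` (hence also `μ ≤ 1` and `ν ≤ 1`). -/
@[ext]
structure IFV where
  mu : ℝ
  nu : ℝ
  mu_nonneg : 0 ≤ mu
  nu_nonneg : 0 ≤ nu
  sum_le : mu + nu ≤ 1

/-- `Z(α,β) = L(1−μ_α, 1−μ_β) + L(ν_α, ν_β)`. -/
noncomputable def Z (a b : IFV) : ℝ := L (1 - a.mu) (1 - b.mu) + L a.nu b.nu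

/-- The normalized Jensen–Shannon IF divergence `JS(α,β) = √(Z(α,β)/2)`. -/
noncomputable def JS (a b : IFV) : ℝ := Real.sqrt (Z a b / 2)

/-- Atanassov's order: `α ⊂ β` iff `μ_α ≤ μ_β` and `ν_α ≥ ν_β`. -/
def IFV.sub (a b : IFV) : Prop := a.mu ≤ b.mu ∧ b.nu ≤ a.nu

/-- Strict Atanassov order: `α ⊊ β` iff `α ⊂ β` and `α ≠ β`. -/
def IFV.ssub (a b : IFV) : Prop := a.sub b ∧ a ≠ b

/-- The IFV `⟨1, 0⟩`. -/
def IFV.posOne : IFV := ⟨1, 0, by norm_num, le_rfl, by norm_num⟩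

/-- The IFV `⟨0, 1⟩`. -/
def IFV.negOne : IFV := ⟨0, 1, le_rfl, by norm_num, by norm_num⟩

theorem L_anti (p q r : ℝ) (hr : 0 ≤ r) (hrq : r ≤ q) (hqp : q ≤ p) : L p q ≤ L p r := by
  rcases eq_or_lt_of_le (hr.trans hrq) with hq | hq
  · have : r = q := by linarith
    rw [this]
  have hp : 0 < p := by linarith
  have h2 : 0 < Real.log 2 := Real.log_pos (by norm_num)
  unfold L Real.logb
  rw [← mul_div_assoc, ← mul_div_assoc, ← mul_div_assoc, ← mul_div_assoc, ← add_div, ← add_div]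
  refine div_le_div_of_nonneg_right ?_ h2.le
  have hs : 0 < p + q := by linarith
  have ht : 0 < p + r := by linarith
  have hneg : Real.log (2 * q / (p + q)) ≤ 0 :=
    Real.log_nonpos (by positivity) (by rw [div_le_one hs]; linarith)
  rcases eq_or_lt_of_le hr with h0 | h0
  · subst h0
    have h3 : Real.log (2 * p / (p + q)) ≤ Real.log (2 * p / (p + 0)) :=
      Real.log_le_log (by positivity) (by gcongr)
    nlinarith
  · have e : ∀ x y : ℝ, 0 < x → 0 < y →
        Real.log (2 * x / y) = Real.log 2 + Real.log x - Real.log y := by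
      intro x y hx hy
      rw [Real.log_div (by positivity) hy.ne', Real.log_mul (by norm_num) hx.ne']
    have k1 : 1 - (p + r) / (p + q) ≤ Real.log (p + q) - Real.log (p + r) := by
      have := Real.one_sub_inv_le_log_of_pos (div_pos hs ht)
      rwa [Real.log_div hs.ne' ht.ne', inv_div] at this
    have k2 : 1 - (p + r) * q / ((p + q) * r) ≤
        Real.log (p + q) + Real.log r - (Real.log (p + r) + Real.log q) := by
      have := Real.one_sub_inv_le_log_of_pos
        (div_pos (mul_pos hs h0) (mul_pos ht hq))
      rwa [Real.log_div (mul_pos hs h0).ne' (mul_pos ht hq).ne', inv_div,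
        Real.log_mul hs.ne' h0.ne', Real.log_mul ht.ne' hq.ne'] at this
    have m1 := mul_le_mul_of_nonneg_left k1 hp.le
    have m2 := mul_le_mul_of_nonneg_left k2 h0.le
    have z : p * (1 - (p + r) / (p + q)) + r * (1 - (p + r) * q / ((p + q) * r)) = 0 := by
      field_simp
      ring
    have m3 := mul_nonneg (sub_nonneg.2 hrq) (neg_nonneg.2 hneg)
    rw [e q _ hq hs] at m3
    rw [e p _ hp hs, e q _ hq hs, e p _ hp ht, e r _ h0 ht]
    linarith

theorem Z_JS_mono_of_sub_chain (a b1 b2 : IFV)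
    (h1 : a.sub b1) (h2 : b1.sub b2) :
    Z a b1 ≤ Z a b2 ∧ JS a b1 ≤ JS a b2 := by
  have hZ : Z a b1 ≤ Z a b2 := by
    have h3 := b2.sum_le
    have h4 := b2.nu_nonneg
    obtain ⟨h5, h6⟩ := h1
    obtain ⟨h7, h8⟩ := h2
    exact add_le_add (L_anti _ _ _ (by linarith) (by linarith) (by linarith))
      (L_anti _ _ _ h4 h8 h6)
  exact ⟨hZ, Real.sqrt_le_sqrt (by linarith)⟩
end

section
/- Let α, β₁, β₂ be intuitionistic fuzzy values with α ⊊ β₁ ⊊ β₂ in Atanassov's order (i.e., α ⊂ β₁ ⊂ β₂ and α ≠ β₁, β₁ ≠ β₂). Then Z(α, β₁) < Z(α, β₂), and consequently JS(α, β₁) < JS(α, β₂). -/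
lemma L_eq (p q : ℝ) (hp : 0 < p) (hq : 0 ≤ q) :
    L p q = (p * Real.log p + q * Real.log q - (p + q) * Real.log (p + q)
      + (p + q) * Real.log 2) / Real.log 2 := by
  unfold L Real.logb
  have hpq : 0 < p + q := by linarith
  rw [Real.log_div (by positivity) hpq.ne', Real.log_mul (by norm_num) hp.ne']
  rcases hq.eq_or_lt with h | h
  · subst h; simp; ring
  · rw [Real.log_div (by positivity) hpq.ne', Real.log_mul (by norm_num) h.ne']
    ring

lemma L_strictAnti (p : ℝ) (hp : 0 < p) : StrictAntiOn (L p) (Set.Icc 0 p) := by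
  have hl : 0 < Real.log 2 := Real.log_pos (by norm_num)
  have key : StrictAntiOn (fun q : ℝ => p * Real.log p + q * Real.log q
      - (p + q) * Real.log (p + q) + (p + q) * Real.log 2) (Set.Icc 0 p) := by
    apply strictAntiOn_of_deriv_neg (convex_Icc 0 p)
    · apply Continuous.continuousOn
      have h1 := Real.continuous_mul_log
      have h2 : Continuous (fun q : ℝ => (p + q) * Real.log (p + q)) :=
        h1.comp (continuous_const.add continuous_id)
      fun_prop
    · intro q hq
      rw [interior_Icc] at hq
      obtain ⟨h0, h1⟩ := hq
      have hpq : 0 < p + q := by linarith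
      have d0 : HasDerivAt (fun q : ℝ => p + q) 1 q := (hasDerivAt_id q).const_add p
      have d1 := Real.hasDerivAt_mul_log h0.ne'
      have d2 : HasDerivAt (fun q : ℝ => (p + q) * Real.log (p + q))
          ((Real.log (p + q) + 1) * 1) q :=
        HasDerivAt.comp q (Real.hasDerivAt_mul_log hpq.ne') d0
      have d := ((d1.const_add (p * Real.log p)).sub d2).add (d0.mul_const (Real.log 2))
      have e := d.deriv
      have : Real.log (2 * q) < Real.log (p + q) := Real.log_lt_log (by linarith) (by linarith)
      rw [Real.log_mul (by norm_num) h0.ne'] at this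
      refine lt_of_eq_of_lt e ?_
      linarith
  intro x hx y hy hxy
  rw [L_eq p x hp hx.1, L_eq p y hp hy.1]
  exact div_lt_div_of_pos_right (key hx hy hxy) hl

lemma L_lt {p x y : ℝ} (hx : 0 ≤ x) (hxy : x < y) (hy : y ≤ p) : L p y < L p x :=
  L_strictAnti p (by linarith) ⟨hx, by linarith⟩ ⟨by linarith, hy⟩ hxy

lemma L_le {p x y : ℝ} (hx : 0 ≤ x) (hxy : x ≤ y) (hy : y ≤ p) : L p y ≤ L p x := by
  rcases hxy.eq_or_lt with h | h
  · rw [h]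
  · exact (L_lt hx h hy).le

lemma L_self (p : ℝ) : L p p = 0 := by
  by_cases h : p = 0
  · simp [L, h]
  · have : 2 * p / (p + p) = 1 := by
      rw [← two_mul]; exact div_self (by simpa using h)
    simp [L, this]

lemma L_nonneg {p q : ℝ} (hq : 0 ≤ q) (h : q ≤ p) : 0 ≤ L p q := by
  rw [← L_self p]; exact L_le hq h le_rfl

theorem Z_JS_strictMono_of_ssub_chain (a b1 b2 : IFV)
    (h1 : a.ssub b1) (h2 : b1.ssub b2) :
    Z a b1 < Z a b2 ∧ JS a b1 < JS a b2 := by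
  obtain ⟨⟨m1, n1⟩, -⟩ := h1
  obtain ⟨⟨m2, n2⟩, ne⟩ := h2
  have s1 := b1.sum_le
  have s2 := b2.sum_le
  have p1 := b1.nu_nonneg
  have p2 := b2.nu_nonneg
  have hZ : Z a b1 < Z a b2 := by
    unfold Z
    rcases m2.eq_or_lt with h | h
    · have hn : b2.nu < b1.nu := lt_of_le_of_ne n2 fun e => ne (IFV.ext h e.symm)
      rw [h]
      linarith [L_lt p2 hn n1]
    · have := L_lt (p := 1 - a.mu) (x := 1 - b2.mu) (y := 1 - b1.mu)
        (by linarith) (by linarith) (by linarith)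
      linarith [L_le p2 n2 n1]
  have h0 : 0 ≤ Z a b1 :=
    add_nonneg (L_nonneg (by linarith) (by linarith)) (L_nonneg p1 n1)
  exact ⟨hZ, Real.sqrt_lt_sqrt (by linarith) (by linarith)⟩
end

section
/- Let α, β₁, β₂ be intuitionistic fuzzy values with β₂ ⊂ β₁ ⊂ α in Atanassov's order. Then Z(α, β₁) ≤ Z(α, β₂), and consequently JS(α, β₁) ≤ JS(α, β₂). -/
theorem L_zero_left (q : ℝ) : L 0 q = q := by
  unfold L
  rcases eq_or_ne q 0 with h | h
  · simp [h]
  · have : 2 * q / (0 + q) = 2 := by rw [zero_add, mul_div_cancel_right₀ _ h]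
    rw [this, Real.logb_self_eq_one (by norm_num)]; ring

theorem L_mono_right (p q r : ℝ) (hp : 0 ≤ p) (hpq : p ≤ q) (hqr : q ≤ r) :
    L p q ≤ L p r := by
  rcases hp.eq_or_lt with h | h
  · subst h
    rw [L_zero_left, L_zero_left]; exact hqr
  have hq : 0 < q := by linarith
  have hr : 0 < r := by linarith
  have key : ∀ s t : ℝ, 0 < s → 0 < t → 1 - t / s ≤ Real.log s - Real.log t := by
    intro s t hs ht
    have := Real.one_sub_inv_le_log_of_pos (div_pos hs ht)
    rwa [inv_div, Real.log_div hs.ne' ht.ne'] at this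
  have e1 := mul_le_mul_of_nonneg_left
    (key (2 * p / (p + r)) (2 * p / (p + q)) (by positivity) (by positivity)) hp
  have e2 := mul_le_mul_of_nonneg_left
    (key (2 * r / (p + r)) (2 * q / (p + q)) (by positivity) (by positivity)) hr.le
  have e3 : p * (1 - (2 * p / (p + q)) / (2 * p / (p + r)))
      + r * (1 - (2 * q / (p + q)) / (2 * r / (p + r))) = 0 := by
    field_simp
    ring
  have e4 : 0 ≤ Real.log (2 * q / (p + q)) := by
    apply Real.log_nonneg
    rw [le_div_iff₀ (by positivity)]
    linarith
  have e5 := mul_le_mul_of_nonneg_right hqr e4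
  have hl : 0 < Real.log 2 := Real.log_pos (by norm_num)
  unfold L Real.logb
  rw [← mul_div_assoc, ← mul_div_assoc, ← mul_div_assoc, ← mul_div_assoc, ← add_div, ← add_div]
  apply div_le_div_of_nonneg_right _ hl.le
  linarith

theorem Z_JS_anti_of_sub_chain (a b1 b2 : IFV)
    (h1 : b2.sub b1) (h2 : b1.sub a) :
    Z a b1 ≤ Z a b2 ∧ JS a b1 ≤ JS a b2 := by
  obtain ⟨m1, n1⟩ := h1
  obtain ⟨m2, n2⟩ := h2
  have hz : Z a b1 ≤ Z a b2 := by
    unfold Z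
    have := a.sum_le
    have := a.nu_nonneg
    exact add_le_add
      (L_mono_right _ _ _ (by linarith) (by linarith) (by linarith))
      (L_mono_right _ _ _ a.nu_nonneg n2 n1)
  refine ⟨hz, ?_⟩
  unfold JS
  exact Real.sqrt_le_sqrt (by linarith)
end

section
/- For all intuitionistic fuzzy values α and β, 0 ≤ Z(α, β) ≤ 2; equivalently, 0 ≤ JS(α, β) ≤ 1. -/
lemma L_term_lower (p q : ℝ) (hp : 0 ≤ p) (hq : 0 ≤ q) :
    p - (p + q) / 2 ≤ p * Real.log (2 * p / (p + q)) := by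
  rcases hp.eq_or_lt with h | h
  · subst h; simp; linarith
  · have hx : 0 < 2 * p / (p + q) := by positivity
    have h1 := Real.one_sub_inv_le_log_of_pos hx
    have h2 := mul_le_mul_of_nonneg_left h1 hp
    have h3 : p * (1 - (2 * p / (p + q))⁻¹) = p - (p + q) / 2 := by
      field_simp
    linarith

lemma L_nonneg_aux (p q : ℝ) (hp : 0 ≤ p) (hq : 0 ≤ q) : 0 ≤ L p q := by
  have h1 := L_term_lower p q hp hq
  have h2 := L_term_lower q p hq hp
  rw [add_comm q p] at h2
  have h : L p q =
      (p * Real.log (2 * p / (p + q)) + q * Real.log (2 * q / (p + q))) / Real.log 2 := by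
    unfold L Real.logb; ring
  rw [h]
  exact div_nonneg (by linarith) (Real.log_nonneg (by norm_num))

lemma L_comm_aux (p q : ℝ) : L p q = L q p := by
  unfold L; rw [add_comm q p]; ring

lemma L_le_of_le (p q : ℝ) (hq : 0 ≤ q) (hqp : q ≤ p) : L p q ≤ p := by
  rcases (hq.trans hqp).eq_or_lt with h | h
  · have : q = 0 := by linarith
    subst this; subst h; simp [L]
  · have hs : 0 < p + q := by linarith
    have h1 : Real.logb 2 (2 * p / (p + q)) ≤ 1 := by
      rw [Real.logb_le_iff_le_rpow (by norm_num) (by positivity), Real.rpow_one, div_le_iff₀ hs]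
      linarith
    have h2 : Real.logb 2 (2 * q / (p + q)) ≤ 0 := by
      apply Real.logb_nonpos (by norm_num) (by positivity)
      rw [div_le_one hs]; linarith
    unfold L
    nlinarith [mul_le_mul_of_nonneg_left h1 h.le, mul_nonpos_of_nonneg_of_nonpos hq h2]

lemma L_le_one_aux (p q : ℝ) (hp : 0 ≤ p) (hq : 0 ≤ q) (hp1 : p ≤ 1) (hq1 : q ≤ 1) :
    L p q ≤ 1 := by
  rcases le_total q p with h | h
  · exact (L_le_of_le p q hq h).trans hp1
  · rw [L_comm_aux]; exact (L_le_of_le q p hp h).trans hq1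

theorem Z_mem_zero_two_and_JS_mem_zero_one (a b : IFV) :
    (0 ≤ Z a b ∧ Z a b ≤ 2) ∧ (0 ≤ JS a b ∧ JS a b ≤ 1) := by
  obtain ⟨m, n, hm, hn, hs⟩ := a
  obtain ⟨m', n', hm', hn', hs'⟩ := b
  have hZ : 0 ≤ Z ⟨m, n, hm, hn, hs⟩ ⟨m', n', hm', hn', hs'⟩ ∧
      Z ⟨m, n, hm, hn, hs⟩ ⟨m', n', hm', hn', hs'⟩ ≤ 2 := by
    unfold Z
    have h1 := L_nonneg_aux (1 - m) (1 - m') (by linarith) (by linarith)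
    have h2 := L_nonneg_aux n n' hn hn'
    have h3 := L_le_one_aux (1 - m) (1 - m') (by linarith) (by linarith) (by linarith)
      (by linarith)
    have h4 := L_le_one_aux n n' hn hn' (by linarith) (by linarith)
    constructor <;> dsimp only <;> linarith
  refine ⟨hZ, Real.sqrt_nonneg _, ?_⟩
  unfold JS
  rw [Real.sqrt_le_iff]
  constructor <;> linarith [hZ.2]
end

section
/- Define the entropy E(α) = 1 − JS(α, α^∁) for an intuitionistic fuzzy value α, where α^∁ = ⟨ν_α, μ_α⟩. Then E(α) = 0 if and only if α = ⟨1,0⟩ or α = ⟨0,1⟩. -/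
/-- The complement `α^∁ = ⟨ν_α, μ_α⟩`. -/
def IFV.compl (a : IFV) : IFV :=
  ⟨a.nu, a.mu, a.nu_nonneg, a.mu_nonneg, by linarith [a.sum_le]⟩

/-- The entropy `E(α) = 1 − JS(α, α^∁)`. -/
noncomputable def E (a : IFV) : ℝ := 1 - JS a a.compl

lemma term_le (p q : ℝ) (hp : 0 ≤ p) (hq : 0 ≤ q) :
    p * Real.logb 2 (2 * p / (p + q)) ≤ p := by
  rcases hp.eq_or_lt with h | h
  · simp [← h]
  · have h1 : Real.logb 2 (2 * p / (p + q)) ≤ 1 := by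
      rw [Real.logb_le_iff_le_rpow (by norm_num) (by positivity), Real.rpow_one,
        div_le_iff₀ (by positivity)]
      linarith
    nlinarith

lemma term_lt (p q : ℝ) (hp : 0 < p) (hq : 0 < q) :
    p * Real.logb 2 (2 * p / (p + q)) < p := by
  have h1 : Real.logb 2 (2 * p / (p + q)) < 1 := by
    rw [Real.logb_lt_iff_lt_rpow (by norm_num) (by positivity), Real.rpow_one,
      div_lt_iff₀ (by positivity)]
    linarith
  nlinarith

lemma L_le_s10 (p q : ℝ) (hp : 0 ≤ p) (hq : 0 ≤ q) : L p q ≤ p + q := by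
  have h1 := term_le p q hp hq
  have h2 := term_le q p hq hp
  rw [add_comm q p] at h2
  unfold L
  linarith

lemma L_lt_s10 (p q : ℝ) (hp : 0 < p) (hq : 0 < q) : L p q < p + q := by
  have h1 := term_lt p q hp hq
  have h2 := term_lt q p hq hp
  rw [add_comm q p] at h2
  unfold L
  linarith

theorem entropy_eq_zero_iff (a : IFV) :
    E a = 0 ↔ a = IFV.posOne ∨ a = IFV.negOne := by
  have hm := a.mu_nonneg
  have hn := a.nu_nonneg
  have hs := a.sum_le
  constructor
  · intro h
    have hJ : Real.sqrt (Z a a.compl / 2) = 1 := by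
      unfold E JS at h
      linarith
    rw [Real.sqrt_eq_one] at hJ
    have hZ : L (1 - a.mu) (1 - a.nu) + L a.nu a.mu = 2 := by
      have : Z a a.compl = 2 := by linarith
      exact this
    have h2 := L_le_s10 a.nu a.mu hn hm
    by_cases h1 : a.mu = 1
    · left
      ext
      · exact h1
      · change a.nu = 0
        linarith
    by_cases h3 : a.nu = 1
    · right
      ext
      · change a.mu = 0
        linarith
      · exact h3
    have h4 : a.mu < 1 := lt_of_le_of_ne (by linarith) h1
    have h5 : a.nu < 1 := lt_of_le_of_ne (by linarith) h3
    have := L_lt_s10 (1 - a.mu) (1 - a.nu) (by linarith) (by linarith)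
    linarith
  · rintro (rfl | rfl) <;>
      norm_num [E, JS, Z, L, IFV.compl, IFV.posOne, IFV.negOne]
end

section
/- Let x₁, …, xₙ be indices with weights ω₁, …, ωₙ ∈ (0,1] summing to 1, and let I₁ = (α_j^{(1)})_{j=1}^n and I₂ = (α_j^{(2)})_{j=1}^n be families of intuitionistic fuzzy values. Define d_Wu(I₁, I₂) = Σ_{j=1}^n ω_j · JS(α_j^{(1)}, α_j^{(2)}). Then d_Wu(I₁, I₂) = 1 if and only if for every j, either (α_j^{(1)} = ⟨0,1⟩ and α_j^{(2)} = ⟨1,0⟩) or (α_j^{(1)} = ⟨1,0⟩ and α_j^{(2)} = ⟨0,1⟩). -/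
lemma mul_log_aux (u : ℝ) (h1 : 1 ≤ u) (h2 : u ≤ 2) :
    u * Real.log u ≤ (u - 1) * (2 * Real.log 2) := by
  have hc := Real.convexOn_mul_log
  have h := hc.2 (show (1 : ℝ) ∈ Set.Ici 0 by simp) (show (2 : ℝ) ∈ Set.Ici 0 by simp)
    (show 0 ≤ 2 - u by linarith) (show 0 ≤ u - 1 by linarith) (by ring)
  simp only [smul_eq_mul, Real.log_one] at h
  have e : (2 - u) * 1 + (u - 1) * 2 = u := by ring
  rw [e] at h
  linarith

lemma L_le_aux (p q : ℝ) (hp : 0 ≤ p) (hpq : p ≤ q) : L p q ≤ q - p := by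
  rcases eq_or_lt_of_le (hp.trans hpq) with hq | hq
  · have : p = 0 := by linarith
    subst this; rw [← hq]; simp [L]
  have hs : 0 < p + q := by linarith
  have hl : 0 < Real.log 2 := Real.log_pos (by norm_num)
  have h1 : p * Real.logb 2 (2 * p / (p + q)) ≤ 0 := by
    apply mul_nonpos_of_nonneg_of_nonpos hp
    apply Real.logb_nonpos (by norm_num) (by positivity)
    rw [div_le_one hs]; linarith
  have h2 := mul_log_aux (2 * q / (p + q)) (by rw [le_div_iff₀ hs]; linarith)
    (by rw [div_le_iff₀ hs]; linarith)
  have h3 : q * Real.logb 2 (2 * q / (p + q)) ≤ q - p := by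
    unfold Real.logb
    rw [← mul_div_assoc, div_le_iff₀ hl]
    have h4 := mul_le_mul_of_nonneg_left h2 hs.le
    have e1 : (p + q) * (2 * q / (p + q) * Real.log (2 * q / (p + q)))
        = 2 * (q * Real.log (2 * q / (p + q))) := by
      generalize Real.log (2 * q / (p + q)) = l
      field_simp
    have e2 : (p + q) * ((2 * q / (p + q) - 1) * (2 * Real.log 2))
        = 2 * ((q - p) * Real.log 2) := by
      field_simp; ring
    rw [e1, e2] at h4
    linarith
  unfold L
  linarith

lemma L_le_abs_aux (p q : ℝ) (hp : 0 ≤ p) (hq : 0 ≤ q) : L p q ≤ |p - q| := by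
  rcases le_total p q with h | h
  · exact (L_le_aux p q hp h).trans (by rw [abs_sub_comm]; exact le_abs_self _)
  · rw [L_comm_aux]
    exact (L_le_aux q p hq h).trans (le_abs_self _)

lemma Z_le_aux (a b : IFV) : Z a b ≤ |a.mu - b.mu| + |a.nu - b.nu| := by
  have h1 := L_le_abs_aux (1 - a.mu) (1 - b.mu)
    (by linarith [a.nu_nonneg, a.sum_le]) (by linarith [b.nu_nonneg, b.sum_le])
  have h2 := L_le_abs_aux a.nu b.nu a.nu_nonneg b.nu_nonneg
  have e : |1 - a.mu - (1 - b.mu)| = |a.mu - b.mu| := by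
    rw [abs_sub_comm]; congr 1; ring
  rw [e] at h1
  unfold Z
  linarith

lemma JS_le_aux (a b : IFV) : JS a b ≤ 1 := by
  have h := Z_le_aux a b
  obtain ⟨m, n, h1, h2, h3⟩ := a
  obtain ⟨m', n', h1', h2', h3'⟩ := b
  have u : |m - m'| ≤ 1 := abs_le.2 ⟨by linarith, by linarith⟩
  have v : |n - n'| ≤ 1 := abs_le.2 ⟨by linarith, by linarith⟩
  unfold JS
  rw [Real.sqrt_le_iff]
  refine ⟨zero_le_one, ?_⟩
  simp only at h
  linarith

lemma JS_eq_aux (a b : IFV) : JS a b = 1 ↔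
    (a = IFV.negOne ∧ b = IFV.posOne) ∨ (a = IFV.posOne ∧ b = IFV.negOne) := by
  constructor
  · intro hJ
    have h := Z_le_aux a b
    unfold JS at hJ
    rw [Real.sqrt_eq_one] at hJ
    obtain ⟨m, n, h1, h2, h3⟩ := a
    obtain ⟨m', n', h1', h2', h3'⟩ := b
    simp only [IFV.negOne, IFV.posOne, IFV.mk.injEq] at *
    rcases abs_cases (m - m') with ⟨e, _⟩ | ⟨e, _⟩ <;>
    rcases abs_cases (n - n') with ⟨e', _⟩ | ⟨e', _⟩ <;> rw [e, e'] at h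
    · exfalso; linarith
    · right; refine ⟨⟨?_, ?_⟩, ?_, ?_⟩ <;> linarith
    · left; refine ⟨⟨?_, ?_⟩, ?_, ?_⟩ <;> linarith
    · exfalso; linarith
  · rintro (⟨rfl, rfl⟩ | ⟨rfl, rfl⟩) <;> norm_num [JS, Z, L, IFV.negOne, IFV.posOne]

theorem dWu_eq_one_iff (n : ℕ) (w : Fin n → ℝ)
    (hw : ∀ j, 0 < w j ∧ w j ≤ 1) (hsum : ∑ j, w j = 1)
    (A B : Fin n → IFV) :
    ∑ j, w j * JS (A j) (B j) = 1 ↔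
      ∀ j, (A j = IFV.negOne ∧ B j = IFV.posOne) ∨
           (A j = IFV.posOne ∧ B j = IFV.negOne) := by
  simp only [← JS_eq_aux]
  constructor
  · intro h j
    have h' : ∑ j, w j * JS (A j) (B j) = ∑ j, w j := h.trans hsum.symm
    rw [Finset.sum_eq_sum_iff_of_le
      (fun i _ => mul_le_of_le_one_right (hw i).1.le (JS_le_aux _ _))] at h'
    have := h' j (Finset.mem_univ j)
    exact (mul_eq_left₀ (hw j).1.ne').1 this
  · intro h
    simp [h, hsum]
end

section
/- For every λ ∈ [0,1]: JS(⟨1,0⟩, ⟨λ,0⟩) = √((1−λ)/2) and JS(⟨1,0⟩, ⟨λ,1−λ⟩) = √(1−λ). In particular, for λ < 1 one has JS(⟨1,0⟩, ⟨λ,0⟩) < JS(⟨1,0⟩, ⟨λ,1−λ⟩), so the Jensen–Shannon IF divergence strictly distinguishes ⟨λ,0⟩ from ⟨λ,1−λ⟩ relative to ⟨1,0⟩. -/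
theorem JS_distinguishes (l : ℝ) (hl0 : 0 ≤ l) (hl1 : l ≤ 1) :
    JS IFV.posOne ⟨l, 0, hl0, le_rfl, by linarith⟩ = Real.sqrt ((1 - l) / 2) ∧
    JS IFV.posOne ⟨l, 1 - l, hl0, by linarith, by linarith⟩ = Real.sqrt (1 - l) ∧
    (l < 1 →
      JS IFV.posOne ⟨l, 0, hl0, le_rfl, by linarith⟩ <
        JS IFV.posOne ⟨l, 1 - l, hl0, by linarith, by linarith⟩) := by
  have h1 : JS IFV.posOne ⟨l, 0, hl0, le_rfl, by linarith⟩ = Real.sqrt ((1 - l) / 2) := by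
    simp [JS, Z, IFV.posOne, L_zero_left]
  have h2 : JS IFV.posOne ⟨l, 1 - l, hl0, by linarith, by linarith⟩ = Real.sqrt (1 - l) := by
    simp [JS, Z, IFV.posOne, L_zero_left]
  refine ⟨h1, h2, fun h => ?_⟩
  rw [h1, h2]
  exact Real.sqrt_lt_sqrt (by linarith) (by linarith)
end
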